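/- arXiv:1511.04087 — 2 statements merged into one kernel-verified Lean document; each statement's English description precedes it below -/
import Mathlib

section
/- Suppose r > 0 and 0 < |u₀| < r are sufficiently small that T_u maps B̄_r(u) into itself. Then T_u is continuously Fréchet differentiable on the open ball B_r(u) = {v ∈ 𝕍 : ‖v − u‖ < r}, and its Fréchet derivative at v ∈ B_r(u) is the bounded linear operator on 𝕍 given by (D(T_u)_v h)(t) = −∫_t^∞ Φ(t,s)·Db(v(s))·h(s) ds, where Db denotes the Jacobian matrix of b : ℝ⁴ → ℝ⁴. -/
open Filter Topology MeasureTheory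

/-- `A₂ = d(d+2)`. -/
noncomputable def A2 (d : ℕ) : ℝ := (d : ℝ) * ((d : ℝ) + 2)

/-- `A₃ = (1/4)·d·(d+2)²·q²`. -/
noncomputable def A3 (d : ℕ) (q : ℝ) : ℝ := (1/4) * (d : ℝ) * ((d : ℝ) + 2)^2 * q^2

/-- The fundamental matrix `Φ(t,s)` of the linear system. -/
noncomputable def Phi (d : ℕ) (t s : ℝ) : Matrix (Fin 4) (Fin 4) ℝ :=
  !![1, (A2 d / (2 * (d : ℝ))) * (Real.exp (-2*(t-s)) - 1), 0, 0;
     0, Real.exp (-2*(t-s)), 0, 0;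
     0, 0, Real.exp (-2*(t-s)), 0;
     0, 0, 0, Real.exp (-2*(t-s))]

/-- The nonlinearity `b : ℝ⁴ → ℝ⁴`. -/
noncomputable def bfun (d : ℕ) (q : ℝ) (v : Fin 4 → ℝ) : Fin 4 → ℝ :=
  ![ -(v 0) * ((d : ℝ) * (v 0)^2 + (v 2)^2 - 2 * v 2) + (2 * A3 d q / (d : ℝ)) * (v 3)^2,
     -2 * v 1 * ((d : ℝ) * (v 0)^2 - v 0 + (v 2)^2 - 2 * v 2),
     -(v 2) * ((d : ℝ) * (v 0)^2 + (v 2)^2 - 3 * v 2) + (d : ℝ) * (v 0)^2 + A3 d q * (v 3)^2,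
     -(v 3) * ((d : ℝ) * (v 0)^2 - 2 * v 0 + (v 2)^2 - 3 * v 2) ]

/-- The nonlinear integral operator `T_u v(t) = u(t) - ∫_t^∞ Φ(t,s) b(v(s)) ds`. -/
noncomputable def Tmap (d : ℕ) (q : ℝ) (u v : ℝ → Fin 4 → ℝ) : ℝ → Fin 4 → ℝ :=
  fun t => u t - ∫ s in Set.Ioi t, (Phi d t s).mulVec (bfun d q (v s))

/-- Membership in the Banach space `𝕍`: continuity on `[0,∞)` and finiteness of the
weighted sup norm `sup_{t ≥ 0} e^{2t}|v(t)|`. -/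
def memV (v : ℝ → Fin 4 → ℝ) : Prop :=
  ContinuousOn v (Set.Ici 0) ∧ ∃ M : ℝ, ∀ t ≥ (0:ℝ), Real.exp (2*t) * ‖v t‖ ≤ M

/-- The weighted sup norm `‖v‖ = sup_{t ≥ 0} e^{2t}|v(t)|`. -/
noncomputable def Vnorm (v : ℝ → Fin 4 → ℝ) : ℝ :=
  ⨆ t : Set.Ici (0:ℝ), Real.exp (2 * (t : ℝ)) * ‖v (t : ℝ)‖

/-- Membership in the closed ball `B̄_r(u) = {v ∈ 𝕍 : ‖v - u‖ ≤ r}`. -/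
def inBall (r : ℝ) (u v : ℝ → Fin 4 → ℝ) : Prop :=
  memV v ∧ ∀ t ≥ (0:ℝ), Real.exp (2*t) * ‖v t - u t‖ ≤ r

/-- The initial vector `u₀ = ((A₂/(2d))y₀, y₀, z₀, w₀)`. -/
noncomputable def uZero (d : ℕ) (y0 z0 w0 : ℝ) : Fin 4 → ℝ :=
  ![A2 d / (2 * (d : ℝ)) * y0, y0, z0, w0]

/-- The solution `u(t) = Φ(t,0)u₀ = e^{-2t} u₀` of the linear system. -/
noncomputable def ufun (d : ℕ) (y0 z0 w0 : ℝ) : ℝ → Fin 4 → ℝ :=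
  fun t => Real.exp (-2*t) • uZero d y0 z0 w0

/-- An (entrywise sup) norm on 4×4 matrices. -/
noncomputable def matNorm (M : Matrix (Fin 4) (Fin 4) ℝ) : ℝ := ⨆ i, ⨆ j, |M i j|

/-- The Jacobian matrix `Db` of `b : ℝ⁴ → ℝ⁴`. -/
noncomputable def Db (d : ℕ) (q : ℝ) (x : Fin 4 → ℝ) : Matrix (Fin 4) (Fin 4) ℝ :=
  Matrix.of fun i j => fderiv ℝ (fun y => bfun d q y i) x (Pi.single j 1)

/-- The candidate derivative `h ↦ (t ↦ −∫_t^∞ Φ(t,s)·Db(v(s))·h(s) ds)` of `T_u` at `v`. -/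
noncomputable def Lop (d : ℕ) (q : ℝ) (v h : ℝ → Fin 4 → ℝ) : ℝ → Fin 4 → ℝ :=
  fun t => -∫ s in Set.Ioi t, (Phi d t s).mulVec ((Db d q (v s)).mulVec (h s))

/-!
Write `T_u = u - S ∘ N` with the superposition operator `N v = b ∘ v` and the linear operator
`(S g)(t) = ∫_t^∞ Φ(t,s) g(s) ds`. Since `b` vanishes to second order at `0`, `N` doubles the decay
rate: it is continuously differentiable from the functions that are `O(e^{-ρt})` to those that are
`O(e^{-2ρt})`. Since `‖Φ(t,s)‖ ≤ C e^{ρ(s-t)}` for `t ≤ s`, the operator `S` loses only half of this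
gain and is bounded from the second space back to the first.
-/

open scoped NNReal

section ExpDecay

variable {E F G : Type*} [NormedAddCommGroup E] [NormedAddCommGroup F] [NormedAddCommGroup G]
  {ρ M t : ℝ} {v w : ℝ → E}

/-- The continuous functions on `[0,∞)` that decay at least like `e^{-ρt}`, i.e. the elements of
the Banach space on which the integral operator acts. As for `memV`, the elements are functions on
all of `ℝ` whose values at negative arguments are irrelevant. -/
def MemExpDecay (ρ : ℝ) (v : ℝ → E) : Prop :=
  ContinuousOn v (Set.Ici 0) ∧ ∃ M : ℝ, ∀ t ≥ (0 : ℝ), Real.exp (ρ * t) * ‖v t‖ ≤ M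

/-- The weighted norm `sup_{t ≥ 0} e^{ρt}‖v(t)‖` of the space `MemExpDecay ρ`. It has the junk
value `0` when the supremum is infinite. -/
noncomputable def expNorm (ρ : ℝ) (v : ℝ → E) : ℝ :=
  ⨆ t : Set.Ici (0 : ℝ), Real.exp (ρ * (t : ℝ)) * ‖v (t : ℝ)‖

lemma expNorm_nonneg (ρ : ℝ) (v : ℝ → E) : 0 ≤ expNorm ρ v :=
  Real.iSup_nonneg fun _ => by positivity

lemma expNorm_le (h : ∀ t ≥ (0 : ℝ), Real.exp (ρ * t) * ‖v t‖ ≤ M) : expNorm ρ v ≤ M :=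
  ciSup_le fun t => h t t.2

namespace MemExpDecay

lemma exp_mul_norm_le (hv : MemExpDecay ρ v) (ht : 0 ≤ t) :
    Real.exp (ρ * t) * ‖v t‖ ≤ expNorm ρ v := by
  obtain ⟨M, hM⟩ := hv.2
  exact le_ciSup (f := fun t : Set.Ici (0 : ℝ) => Real.exp (ρ * (t : ℝ)) * ‖v (t : ℝ)‖)
    ⟨M, Set.forall_mem_range.2 fun t => hM t t.2⟩ ⟨t, ht⟩

lemma norm_le_mul_exp (hv : MemExpDecay ρ v) (ht : 0 ≤ t) :
    ‖v t‖ ≤ expNorm ρ v * Real.exp (-ρ * t) := by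
  rw [neg_mul, Real.exp_neg, ← div_eq_mul_inv, le_div_iff₀' (Real.exp_pos _)]
  exact hv.exp_mul_norm_le ht

lemma norm_le (hρ : 0 ≤ ρ) (hv : MemExpDecay ρ v) (ht : 0 ≤ t) : ‖v t‖ ≤ expNorm ρ v :=
  (le_mul_of_one_le_left (norm_nonneg _) (Real.one_le_exp (by positivity))).trans
    (hv.exp_mul_norm_le ht)

lemma mapsTo_closedBall (hρ : 0 ≤ ρ) (hv : MemExpDecay ρ v) (h : expNorm ρ v ≤ M) :
    Set.MapsTo v (Set.Ici 0) (Metric.closedBall 0 M) :=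
  fun _ ht => mem_closedBall_zero_iff.2 ((hv.norm_le hρ ht).trans h)

lemma exp_mul_norm_add_le (hv : MemExpDecay ρ v) (hw : MemExpDecay ρ w) (ht : 0 ≤ t) :
    Real.exp (ρ * t) * ‖(v + w) t‖ ≤ expNorm ρ v + expNorm ρ w :=
  calc Real.exp (ρ * t) * ‖v t + w t‖
      ≤ Real.exp (ρ * t) * (‖v t‖ + ‖w t‖) := by gcongr; exact norm_add_le _ _
    _ = Real.exp (ρ * t) * ‖v t‖ + Real.exp (ρ * t) * ‖w t‖ := mul_add _ _ _
    _ ≤ expNorm ρ v + expNorm ρ w := add_le_add (hv.exp_mul_norm_le ht) (hw.exp_mul_norm_le ht)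

lemma add (hv : MemExpDecay ρ v) (hw : MemExpDecay ρ w) : MemExpDecay ρ (v + w) :=
  ⟨hv.1.add hw.1, _, fun _ ht => hv.exp_mul_norm_add_le hw ht⟩

lemma neg (hv : MemExpDecay ρ v) : MemExpDecay ρ (-v) :=
  ⟨hv.1.neg, expNorm ρ v, fun t ht => by simpa using hv.exp_mul_norm_le ht⟩

lemma sub (hv : MemExpDecay ρ v) (hw : MemExpDecay ρ w) : MemExpDecay ρ (v - w) := by
  simpa only [sub_eq_add_neg] using hv.add hw.neg

lemma expNorm_add_le (hv : MemExpDecay ρ v) (hw : MemExpDecay ρ w) :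
    expNorm ρ (v + w) ≤ expNorm ρ v + expNorm ρ w :=
  expNorm_le fun _ ht => hv.exp_mul_norm_add_le hw ht

variable {w : ℝ → F} {g : ℝ → G} {K : ℝ}

lemma exp_two_mul_norm_le (hv : MemExpDecay ρ v) (hw : MemExpDecay ρ w) (hK : 0 ≤ K)
    (ht : 0 ≤ t) (hg : ‖g t‖ ≤ K * ‖v t‖ * ‖w t‖) :
    Real.exp (2 * ρ * t) * ‖g t‖ ≤ K * expNorm ρ v * expNorm ρ w := by
  have hexp : Real.exp (2 * ρ * t) = Real.exp (ρ * t) * Real.exp (ρ * t) := by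
    rw [← Real.exp_add]; ring_nf
  calc Real.exp (2 * ρ * t) * ‖g t‖
      ≤ Real.exp (2 * ρ * t) * (K * ‖v t‖ * ‖w t‖) := by gcongr
    _ = K * (Real.exp (ρ * t) * ‖v t‖) * (Real.exp (ρ * t) * ‖w t‖) := by rw [hexp]; ring
    _ ≤ K * expNorm ρ v * expNorm ρ w := by
      gcongr
      exacts [mul_nonneg hK (expNorm_nonneg ρ v), hv.exp_mul_norm_le ht, hw.exp_mul_norm_le ht]

lemma of_norm_le_mul (hv : MemExpDecay ρ v) (hw : MemExpDecay ρ w) (hK : 0 ≤ K)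
    (hcont : ContinuousOn g (Set.Ici 0)) (hg : ∀ t ≥ (0 : ℝ), ‖g t‖ ≤ K * ‖v t‖ * ‖w t‖) :
    MemExpDecay (2 * ρ) g :=
  ⟨hcont, _, fun t ht => exp_two_mul_norm_le hv hw hK ht (hg t ht)⟩

lemma expNorm_le_mul (hv : MemExpDecay ρ v) (hw : MemExpDecay ρ w) (hK : 0 ≤ K)
    (hg : ∀ t ≥ (0 : ℝ), ‖g t‖ ≤ K * ‖v t‖ * ‖w t‖) :
    expNorm (2 * ρ) g ≤ K * expNorm ρ v * expNorm ρ w :=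
  expNorm_le fun t ht => exp_two_mul_norm_le hv hw hK ht (hg t ht)

end MemExpDecay

end ExpDecay

section TailIntegral

variable {E F : Type*} [NormedAddCommGroup E] [NormedSpace ℝ E] [NormedAddCommGroup F]
  [NormedSpace ℝ F] {ρ C t s : ℝ} {Φ : ℝ → ℝ → F →L[ℝ] E} {g g₁ g₂ : ℝ → F}

/-- A jointly continuous operator kernel `Φ(t,s)` whose backward propagation, from time `s` to an
earlier time `t`, grows at most like `C e^{ρ(s-t)}`. -/
structure IsExpBoundedKernel (ρ C : ℝ) (Φ : ℝ → ℝ → F →L[ℝ] E) : Prop where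
  continuous : Continuous fun p : ℝ × ℝ => Φ p.1 p.2
  norm_le : ∀ ⦃t s : ℝ⦄, t ≤ s → ‖Φ t s‖ ≤ C * Real.exp (ρ * (s - t))

/-- The linear operator `(S g)(t) = ∫_t^∞ Φ(t,s) g(s) ds`. -/
noncomputable def tailIntegral (Φ : ℝ → ℝ → F →L[ℝ] E) (g : ℝ → F) (t : ℝ) : E :=
  ∫ s in Set.Ioi t, Φ t s (g s)

lemma isExpBoundedKernel_add_exp_smul (hρ : 0 ≤ ρ) (P Q : F →L[ℝ] E) :
    IsExpBoundedKernel ρ (‖P‖ + ‖Q‖) fun t s => P + Real.exp (ρ * (s - t)) • Q where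
  continuous := by fun_prop
  norm_le t s hts := by
    have hexp : 1 ≤ Real.exp (ρ * (s - t)) :=
      Real.one_le_exp (mul_nonneg hρ (sub_nonneg.2 hts))
    calc ‖P + Real.exp (ρ * (s - t)) • Q‖
        ≤ ‖P‖ + Real.exp (ρ * (s - t)) * ‖Q‖ := by
          simpa [norm_smul] using norm_add_le P (Real.exp (ρ * (s - t)) • Q)
      _ ≤ ‖P‖ * Real.exp (ρ * (s - t)) + Real.exp (ρ * (s - t)) * ‖Q‖ := by
          gcongr; exact le_mul_of_one_le_right (norm_nonneg P) hexp
      _ = (‖P‖ + ‖Q‖) * Real.exp (ρ * (s - t)) := by ring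

lemma tailIntegral_smul (c : ℝ) : tailIntegral Φ (c • g) t = c • tailIntegral Φ g t := by
  simp only [tailIntegral, Pi.smul_apply, map_smul, integral_smul]

/-- In this form the domain of integration does not depend on `t`, so that dominated convergence
applies. -/
lemma tailIntegral_eq_integral_Ioi_zero :
    tailIntegral Φ g t = ∫ τ in Set.Ioi 0, Φ t (t + τ) (g (t + τ)) := by
  have h := (measurePreserving_add_left volume t).setIntegral_preimage_emb
    (measurableEmbedding_addLeft t) (fun s => Φ t s (g s)) (Set.Ioi t)
  simpa only [Set.preimage_const_add_Ioi, sub_self, tailIntegral] using h.symm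

namespace IsExpBoundedKernel

lemma const_nonneg (hΦ : IsExpBoundedKernel ρ C Φ) : 0 ≤ C := by
  simpa using (norm_nonneg _).trans (hΦ.norm_le (le_refl 0))

lemma norm_apply_le (hΦ : IsExpBoundedKernel ρ C Φ) (hg : MemExpDecay (2 * ρ) g) (ht : 0 ≤ t)
    (hts : t ≤ s) :
    ‖Φ t s (g s)‖ ≤ C * expNorm (2 * ρ) g * Real.exp (-ρ * t) * Real.exp (-ρ * s) := by
  have hexp : Real.exp (ρ * (s - t)) * Real.exp (-(2 * ρ) * s) =
      Real.exp (-ρ * t) * Real.exp (-ρ * s) := by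
    rw [← Real.exp_add, ← Real.exp_add]; ring_nf
  calc ‖Φ t s (g s)‖
      ≤ (C * Real.exp (ρ * (s - t))) * (expNorm (2 * ρ) g * Real.exp (-(2 * ρ) * s)) :=
        (Φ t s).le_of_opNorm_le_of_le (hΦ.norm_le hts) (hg.norm_le_mul_exp (ht.trans hts))
    _ = C * expNorm (2 * ρ) g * (Real.exp (ρ * (s - t)) * Real.exp (-(2 * ρ) * s)) := by ring
    _ = C * expNorm (2 * ρ) g * Real.exp (-ρ * t) * Real.exp (-ρ * s) := by rw [hexp]; ring

lemma continuousOn_apply (hΦ : IsExpBoundedKernel ρ C Φ) (hg : ContinuousOn g (Set.Ici 0)) :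
    ContinuousOn (fun p : ℝ × ℝ => Φ p.1 p.2 (g p.2)) {p | 0 ≤ p.2} :=
  hΦ.continuous.continuousOn.clm_apply (hg.comp continuousOn_snd fun _ hp => hp)

lemma integrableOn_apply (hρ : 0 < ρ) (hΦ : IsExpBoundedKernel ρ C Φ)
    (hg : MemExpDecay (2 * ρ) g) (ht : 0 ≤ t) :
    IntegrableOn (fun s => Φ t s (g s)) (Set.Ioi t) := by
  have hcont : ContinuousOn (fun s => Φ t s (g s)) (Set.Ioi t) :=
    (hΦ.continuousOn_apply hg.1).comp (Continuous.prodMk_right t).continuousOn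
      fun s hs => ht.trans (le_of_lt hs)
  refine Integrable.mono' ((integrableOn_exp_mul_Ioi (neg_lt_zero.2 hρ) t).const_mul
    (C * expNorm (2 * ρ) g * Real.exp (-ρ * t))) (hcont.aestronglyMeasurable measurableSet_Ioi) ?_
  filter_upwards [ae_restrict_mem measurableSet_Ioi] with s hs
  exact hΦ.norm_apply_le hg ht (le_of_lt hs)

lemma exp_mul_norm_tailIntegral_le (hρ : 0 < ρ) (hΦ : IsExpBoundedKernel ρ C Φ)
    (hg : MemExpDecay (2 * ρ) g) (ht : 0 ≤ t) :
    Real.exp (ρ * t) * ‖tailIntegral Φ g t‖ ≤ C / ρ * expNorm (2 * ρ) g := by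
  set N := expNorm (2 * ρ) g
  have hCN : 0 ≤ C / ρ * N :=
    mul_nonneg (div_nonneg hΦ.const_nonneg hρ.le) (expNorm_nonneg _ g)
  have hnorm : ‖tailIntegral Φ g t‖ ≤ C * N * Real.exp (-ρ * t) * (Real.exp (-ρ * t) / ρ) :=
    calc ‖tailIntegral Φ g t‖
        ≤ ∫ s in Set.Ioi t, C * N * Real.exp (-ρ * t) * Real.exp (-ρ * s) := by
          refine norm_integral_le_of_norm_le
            ((integrableOn_exp_mul_Ioi (neg_lt_zero.2 hρ) t).const_mul _) ?_
          filter_upwards [ae_restrict_mem measurableSet_Ioi] with s hs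
          exact hΦ.norm_apply_le hg ht (le_of_lt hs)
      _ = C * N * Real.exp (-ρ * t) * (Real.exp (-ρ * t) / ρ) := by
          rw [integral_const_mul, integral_exp_mul_Ioi (neg_lt_zero.2 hρ), neg_div_neg_eq]
  have hcancel : Real.exp (ρ * t) * Real.exp (-ρ * t) = 1 := by
    rw [← Real.exp_add]; simp
  calc Real.exp (ρ * t) * ‖tailIntegral Φ g t‖
      ≤ Real.exp (ρ * t) * (C * N * Real.exp (-ρ * t) * (Real.exp (-ρ * t) / ρ)) := by gcongr
    _ = (Real.exp (ρ * t) * Real.exp (-ρ * t)) * (C / ρ * N) * Real.exp (-ρ * t) := by ring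
    _ = C / ρ * N * Real.exp (-ρ * t) := by rw [hcancel, one_mul]
    _ ≤ C / ρ * N :=
      mul_le_of_le_one_right hCN (Real.exp_le_one_iff.2 (by nlinarith))

lemma continuousOn_tailIntegral (hρ : 0 < ρ) (hΦ : IsExpBoundedKernel ρ C Φ)
    (hg : MemExpDecay (2 * ρ) g) : ContinuousOn (tailIntegral Φ g) (Set.Ici 0) := by
  have hshift : ContinuousOn (fun p : ℝ × ℝ => Φ p.1 (p.1 + p.2) (g (p.1 + p.2)))
      (Set.Ici 0 ×ˢ Set.Ici 0) :=
    (hΦ.continuousOn_apply hg.1).comp (f := fun p : ℝ × ℝ => (p.1, p.1 + p.2)) (by fun_prop)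
      fun p hp => show (0 : ℝ) ≤ p.1 + p.2 from add_nonneg hp.1 hp.2
  rw [show tailIntegral Φ g = _ from funext fun t => tailIntegral_eq_integral_Ioi_zero]
  refine continuousOn_of_dominated (bound := fun τ => C * expNorm (2 * ρ) g * Real.exp (-ρ * τ))
    (fun t ht => ?_) (fun t ht => ?_)
    ((integrableOn_exp_mul_Ioi (neg_lt_zero.2 hρ) 0).const_mul _) ?_
  · exact (hshift.comp (f := fun τ => (t, τ)) (by fun_prop) fun τ hτ =>
      ⟨ht, le_of_lt hτ⟩).aestronglyMeasurable measurableSet_Ioi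
  · filter_upwards [ae_restrict_mem measurableSet_Ioi] with τ hτ
    have ht : 0 ≤ t := ht
    have hτ : 0 < τ := hτ
    refine (hΦ.norm_apply_le hg ht (le_add_of_nonneg_right hτ.le)).trans ?_
    rw [mul_assoc, ← Real.exp_add]
    have hCN := mul_nonneg hΦ.const_nonneg (expNorm_nonneg (2 * ρ) g)
    gcongr
    nlinarith
  · filter_upwards [ae_restrict_mem measurableSet_Ioi] with τ hτ
    exact hshift.comp (f := fun t => (t, τ)) (by fun_prop) fun t ht =>
      ⟨ht, le_of_lt (Set.mem_Ioi.1 hτ)⟩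

lemma memExpDecay_tailIntegral (hρ : 0 < ρ) (hΦ : IsExpBoundedKernel ρ C Φ)
    (hg : MemExpDecay (2 * ρ) g) : MemExpDecay ρ (tailIntegral Φ g) :=
  ⟨hΦ.continuousOn_tailIntegral hρ hg, _, fun _ => hΦ.exp_mul_norm_tailIntegral_le hρ hg⟩

lemma tailIntegral_add (hρ : 0 < ρ) (hΦ : IsExpBoundedKernel ρ C Φ)
    (hg₁ : MemExpDecay (2 * ρ) g₁) (hg₂ : MemExpDecay (2 * ρ) g₂) (ht : 0 ≤ t) :
    tailIntegral Φ (g₁ + g₂) t = tailIntegral Φ g₁ t + tailIntegral Φ g₂ t := by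
  simp only [tailIntegral, Pi.add_apply, map_add]
  exact integral_add (hΦ.integrableOn_apply hρ hg₁ ht) (hΦ.integrableOn_apply hρ hg₂ ht)

lemma tailIntegral_sub (hρ : 0 < ρ) (hΦ : IsExpBoundedKernel ρ C Φ)
    (hg₁ : MemExpDecay (2 * ρ) g₁) (hg₂ : MemExpDecay (2 * ρ) g₂) (ht : 0 ≤ t) :
    tailIntegral Φ (g₁ - g₂) t = tailIntegral Φ g₁ t - tailIntegral Φ g₂ t := by
  simp only [tailIntegral, Pi.sub_apply, map_sub]
  exact integral_sub (hΦ.integrableOn_apply hρ hg₁ ht) (hΦ.integrableOn_apply hρ hg₂ ht)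

end IsExpBoundedKernel

end TailIntegral

section Superposition

variable {E F : Type*} [NormedAddCommGroup E] [NormedSpace ℝ E] [NormedAddCommGroup F]
  [NormedSpace ℝ F] {ρ : ℝ} {K : ℝ≥0} {S : Set E} {b : E → F} {x y : E} {v v' h : ℝ → E}

/-- `b` has a `K`-Lipschitz derivative on the convex set `S`, and it vanishes to second order at
the point `0` of `S`. -/
structure VanishesQuadraticallyOn (K : ℝ≥0) (S : Set E) (b : E → F) : Prop where
  convex : Convex ℝ S
  zero_mem : (0 : E) ∈ S
  differentiableAt : ∀ x ∈ S, DifferentiableAt ℝ b x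
  lipschitzOnWith_fderiv : LipschitzOnWith K (fderiv ℝ b) S
  map_zero : b 0 = 0
  fderiv_zero : fderiv ℝ b 0 = 0

lemma exists_vanishesQuadraticallyOn_closedBall [FiniteDimensional ℝ E] (hb : ContDiff ℝ 2 b)
    (hb₀ : b 0 = 0) (hb'₀ : fderiv ℝ b 0 = 0) {R : ℝ} (hR : 0 ≤ R) :
    ∃ K, VanishesQuadraticallyOn K (Metric.closedBall 0 R) b := by
  have := FiniteDimensional.proper ℝ E
  obtain ⟨K, hK⟩ := (hb.fderiv_right (m := 1) (by norm_num)).contDiffOn.exists_lipschitzOnWith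
    one_ne_zero (convex_closedBall (0 : E) R) (isCompact_closedBall 0 R)
  exact ⟨K, convex_closedBall 0 R, Metric.mem_closedBall_self hR,
    fun x _ => hb.differentiable two_ne_zero x, hK, hb₀, hb'₀⟩

namespace VanishesQuadraticallyOn

lemma norm_fderiv_sub_apply_le (hb : VanishesQuadraticallyOn K S b) (hx : x ∈ S) (hy : y ∈ S)
    (z : E) : ‖fderiv ℝ b y z - fderiv ℝ b x z‖ ≤ K * ‖y - x‖ * ‖z‖ :=
  (fderiv ℝ b y - fderiv ℝ b x).le_of_opNorm_le
    (hb.lipschitzOnWith_fderiv.norm_sub_le hy hx) z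

lemma norm_fderiv_apply_le (hb : VanishesQuadraticallyOn K S b) (hx : x ∈ S) (z : E) :
    ‖fderiv ℝ b x z‖ ≤ K * ‖x‖ * ‖z‖ := by
  simpa [hb.fderiv_zero] using hb.norm_fderiv_sub_apply_le hb.zero_mem hx z

lemma norm_sub_sub_fderiv_le (hb : VanishesQuadraticallyOn K S b) (hx : x ∈ S) (hy : y ∈ S) :
    ‖b y - b x - fderiv ℝ b x (y - x)‖ ≤ K * ‖y - x‖ * ‖y - x‖ := by
  have hseg : segment ℝ x y ⊆ S := hb.convex.segment_subset hx hy
  refine (convex_segment x y).norm_image_sub_le_of_norm_fderiv_le' (𝕜 := ℝ)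
    (fun z hz => hb.differentiableAt z (hseg hz)) (fun z hz => ?_)
    (left_mem_segment ℝ x y) (right_mem_segment ℝ x y)
  calc ‖fderiv ℝ b z - fderiv ℝ b x‖
      ≤ K * ‖z - x‖ := hb.lipschitzOnWith_fderiv.norm_sub_le (hseg hz) hx
    _ ≤ K * ‖y - x‖ := by gcongr; exact norm_sub_le_of_mem_segment hz

lemma norm_apply_le (hb : VanishesQuadraticallyOn K S b) (hx : x ∈ S) :
    ‖b x‖ ≤ K * ‖x‖ * ‖x‖ := by
  simpa [hb.fderiv_zero, hb.map_zero] using hb.norm_sub_sub_fderiv_le hb.zero_mem hx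

lemma memExpDecay_comp (hb : VanishesQuadraticallyOn K S b) (hv : MemExpDecay ρ v)
    (hvS : Set.MapsTo v (Set.Ici 0) S) : MemExpDecay (2 * ρ) (b ∘ v) :=
  .of_norm_le_mul hv hv K.2
    (ContinuousOn.comp (fun x hx => (hb.differentiableAt x hx).continuousAt.continuousWithinAt)
      hv.1 hvS)
    fun _ hs => hb.norm_apply_le (hvS hs)

lemma memExpDecay_fderiv_comp (hb : VanishesQuadraticallyOn K S b) (hv : MemExpDecay ρ v)
    (hvS : Set.MapsTo v (Set.Ici 0) S) (hh : MemExpDecay ρ h) :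
    MemExpDecay (2 * ρ) fun s => fderiv ℝ b (v s) (h s) :=
  .of_norm_le_mul hv hh K.2
    ((hb.lipschitzOnWith_fderiv.continuousOn.comp hv.1 hvS).clm_apply hh.1)
    fun _ hs => hb.norm_fderiv_apply_le (hvS hs) _

lemma expNorm_fderiv_comp_le (hb : VanishesQuadraticallyOn K S b) (hv : MemExpDecay ρ v)
    (hvS : Set.MapsTo v (Set.Ici 0) S) (hh : MemExpDecay ρ h) :
    expNorm (2 * ρ) (fun s => fderiv ℝ b (v s) (h s)) ≤ K * expNorm ρ v * expNorm ρ h :=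
  hv.expNorm_le_mul hh K.2 fun _ hs => hb.norm_fderiv_apply_le (hvS hs) _

lemma expNorm_comp_sub_sub_fderiv_comp_le (hb : VanishesQuadraticallyOn K S b)
    (hvS : Set.MapsTo v (Set.Ici 0) S) (hh : MemExpDecay ρ h)
    (hvhS : Set.MapsTo (v + h) (Set.Ici 0) S) :
    expNorm (2 * ρ) (b ∘ (v + h) - b ∘ v - fun s => fderiv ℝ b (v s) (h s)) ≤
      K * expNorm ρ h * expNorm ρ h :=
  hh.expNorm_le_mul hh K.2 fun s hs => by
    simpa using hb.norm_sub_sub_fderiv_le (hvS hs) (hvhS hs)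

lemma expNorm_fderiv_comp_sub_le (hb : VanishesQuadraticallyOn K S b) (hv : MemExpDecay ρ v)
    (hvS : Set.MapsTo v (Set.Ici 0) S) (hv' : MemExpDecay ρ v')
    (hv'S : Set.MapsTo v' (Set.Ici 0) S) (hh : MemExpDecay ρ h) :
    expNorm (2 * ρ) ((fun s => fderiv ℝ b (v' s) (h s)) - fun s => fderiv ℝ b (v s) (h s)) ≤
      K * expNorm ρ (v' - v) * expNorm ρ h :=
  (hv'.sub hv).expNorm_le_mul hh K.2 fun s hs =>
    hb.norm_fderiv_sub_apply_le (hvS hs) (hv'S hs) (h s)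

end VanishesQuadraticallyOn

end Superposition

section TailMap

variable {E F : Type*} [NormedAddCommGroup E] [NormedSpace ℝ E] [NormedAddCommGroup F]
  [NormedSpace ℝ F] {ρ C t : ℝ} {K : ℝ≥0} {S : Set E} {Φ : ℝ → ℝ → F →L[ℝ] E} {b : E → F}
  {v v' h h₁ h₂ : ℝ → E}

/-- The Lyapunov–Perron map `T_u v(t) = u(t) - ∫_t^∞ Φ(t,s) b(v(s)) ds` of a kernel `Φ` and a
nonlinearity `b`. -/
noncomputable def tailMap (Φ : ℝ → ℝ → F →L[ℝ] E) (b : E → F) (u v : ℝ → E) : ℝ → E :=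
  u - tailIntegral Φ (b ∘ v)

/-- The formal linearization `h ↦ (t ↦ -∫_t^∞ Φ(t,s) Db(v(s)) h(s) ds)` of `tailMap Φ b u` at
`v`, which does not depend on `u`. -/
noncomputable def tailMapDeriv (Φ : ℝ → ℝ → F →L[ℝ] E) (b : E → F) (v h : ℝ → E) : ℝ → E :=
  -tailIntegral Φ fun s => fderiv ℝ b (v s) (h s)

lemma tailMapDeriv_smul (c : ℝ) : tailMapDeriv Φ b v (c • h) t = c • tailMapDeriv Φ b v h t := by
  have hsmul : (fun s => fderiv ℝ b (v s) ((c • h) s)) = c • fun s => fderiv ℝ b (v s) (h s) :=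
    funext fun s => map_smul _ c (h s)
  simp only [tailMapDeriv, hsmul, Pi.neg_apply, tailIntegral_smul, smul_neg]

namespace IsExpBoundedKernel

variable (hρ : 0 < ρ) (hΦ : IsExpBoundedKernel ρ C Φ) (hb : VanishesQuadraticallyOn K S b)
  (hv : MemExpDecay ρ v) (hvS : Set.MapsTo v (Set.Ici 0) S)

include hρ hΦ hb hv hvS

lemma memExpDecay_tailMapDeriv (hh : MemExpDecay ρ h) :
    MemExpDecay ρ (tailMapDeriv Φ b v h) :=
  (hΦ.memExpDecay_tailIntegral hρ (hb.memExpDecay_fderiv_comp hv hvS hh)).neg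

lemma tailMapDeriv_add (hh₁ : MemExpDecay ρ h₁) (hh₂ : MemExpDecay ρ h₂) (ht : 0 ≤ t) :
    tailMapDeriv Φ b v (h₁ + h₂) t = tailMapDeriv Φ b v h₁ t + tailMapDeriv Φ b v h₂ t := by
  have hadd : (fun s => fderiv ℝ b (v s) ((h₁ + h₂) s)) =
      (fun s => fderiv ℝ b (v s) (h₁ s)) + fun s => fderiv ℝ b (v s) (h₂ s) :=
    funext fun s => map_add _ (h₁ s) (h₂ s)
  simp only [tailMapDeriv, hadd, Pi.neg_apply, neg_add,
    hΦ.tailIntegral_add hρ (hb.memExpDecay_fderiv_comp hv hvS hh₁)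
      (hb.memExpDecay_fderiv_comp hv hvS hh₂) ht]

lemma exp_mul_norm_tailMapDeriv_le (hh : MemExpDecay ρ h) (ht : 0 ≤ t) :
    Real.exp (ρ * t) * ‖tailMapDeriv Φ b v h t‖ ≤
      C / ρ * (K * expNorm ρ v * expNorm ρ h) := by
  have hC := div_nonneg hΦ.const_nonneg hρ.le
  rw [tailMapDeriv, Pi.neg_apply, norm_neg]
  refine (hΦ.exp_mul_norm_tailIntegral_le hρ (hb.memExpDecay_fderiv_comp hv hvS hh) ht).trans ?_
  gcongr
  exact hb.expNorm_fderiv_comp_le hv hvS hh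

lemma exp_mul_norm_tailMap_sub_sub_tailMapDeriv_le (u : ℝ → E) (hh : MemExpDecay ρ h)
    (hvhS : Set.MapsTo (v + h) (Set.Ici 0) S) (ht : 0 ≤ t) :
    Real.exp (ρ * t) * ‖tailMap Φ b u (v + h) t - tailMap Φ b u v t - tailMapDeriv Φ b v h t‖ ≤
      C / ρ * (K * expNorm ρ h * expNorm ρ h) := by
  have hC := div_nonneg hΦ.const_nonneg hρ.le
  have hNv := hb.memExpDecay_comp hv hvS
  have hNvh := hb.memExpDecay_comp (hv.add hh) hvhS
  have hNh := hb.memExpDecay_fderiv_comp hv hvS hh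
  have hrem : tailMap Φ b u (v + h) t - tailMap Φ b u v t - tailMapDeriv Φ b v h t =
      -tailIntegral Φ (b ∘ (v + h) - b ∘ v - fun s => fderiv ℝ b (v s) (h s)) t := by
    rw [hΦ.tailIntegral_sub hρ (hNvh.sub hNv) hNh ht, hΦ.tailIntegral_sub hρ hNvh hNv ht]
    simp only [tailMap, tailMapDeriv, Pi.sub_apply, Pi.neg_apply]
    abel
  rw [hrem, norm_neg]
  refine (hΦ.exp_mul_norm_tailIntegral_le hρ ((hNvh.sub hNv).sub hNh) ht).trans ?_
  gcongr
  exact hb.expNorm_comp_sub_sub_fderiv_comp_le hvS hh hvhS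

lemma exp_mul_norm_tailMapDeriv_sub_le (hv' : MemExpDecay ρ v')
    (hv'S : Set.MapsTo v' (Set.Ici 0) S) (hh : MemExpDecay ρ h) (ht : 0 ≤ t) :
    Real.exp (ρ * t) * ‖tailMapDeriv Φ b v' h t - tailMapDeriv Φ b v h t‖ ≤
      C / ρ * (K * expNorm ρ (v' - v) * expNorm ρ h) := by
  have hC := div_nonneg hΦ.const_nonneg hρ.le
  have hNv := hb.memExpDecay_fderiv_comp hv hvS hh
  have hNv' := hb.memExpDecay_fderiv_comp hv' hv'S hh
  have hsub : tailMapDeriv Φ b v' h t - tailMapDeriv Φ b v h t =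
      -tailIntegral Φ ((fun s => fderiv ℝ b (v' s) (h s)) - fun s => fderiv ℝ b (v s) (h s)) t := by
    rw [hΦ.tailIntegral_sub hρ hNv' hNv ht]
    simp only [tailMapDeriv, Pi.neg_apply]
    abel
  rw [hsub, norm_neg]
  refine (hΦ.exp_mul_norm_tailIntegral_le hρ (hNv'.sub hNv) ht).trans ?_
  gcongr
  exact hb.expNorm_fderiv_comp_sub_le hv hvS hv' hv'S hh

end IsExpBoundedKernel

end TailMap

section Coefficients

variable (d : ℕ) (q : ℝ)

lemma contDiff_bfun {n : WithTop ℕ∞} : ContDiff ℝ n (bfun d q) := by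
  refine contDiff_pi.2 fun i => ?_
  fin_cases i <;>
    simp only [bfun, Fin.zero_eta, Fin.mk_one, Fin.reduceFinMk, Matrix.cons_val] <;> fun_prop

lemma bfun_zero : bfun d q 0 = 0 := by
  ext i
  fin_cases i <;> simp [bfun]

lemma fderiv_bfun_zero : fderiv ℝ (bfun d q) 0 = 0 := by
  have hcomp (i : Fin 4) : fderiv ℝ (fun y => bfun d q y i) 0 = 0 := by
    fin_cases i <;>
      simp (disch := first | fun_prop | norm_num) [bfun, fderiv_fun_mul, fderiv_fun_add,
        fderiv_fun_pow]
  ext x i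
  have h := fderiv_apply ((contDiff_bfun d q).differentiable one_ne_zero 0) i
  rw [hcomp] at h
  simpa using (DFunLike.congr_fun h x).symm

lemma Db_eq_toMatrix' (x : Fin 4 → ℝ) :
    Db d q x = LinearMap.toMatrix' (fderiv ℝ (bfun d q) x : (Fin 4 → ℝ) →ₗ[ℝ] Fin 4 → ℝ) := by
  ext i j
  simp only [Db, Matrix.of_apply]
  rw [fderiv_apply ((contDiff_bfun d q).differentiable one_ne_zero x) i]
  rfl

lemma Db_mulVec (x h : Fin 4 → ℝ) : (Db d q x).mulVec h = fderiv ℝ (bfun d q) x h := by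
  rw [Db_eq_toMatrix', LinearMap.toMatrix'_mulVec, ContinuousLinearMap.coe_coe]

/-- The matrix `Φ(t,s)` as a bounded operator on `ℝ⁴` with the sup norm, which makes `Tmap` and
`Lop` instances of `tailMap` and `tailMapDeriv`. -/
noncomputable def PhiCLM (t s : ℝ) : (Fin 4 → ℝ) →L[ℝ] Fin 4 → ℝ :=
  LinearMap.toContinuousLinearMap (Matrix.toLin' (Phi d t s))

/-- The spectral projection of the linear system onto its neutral direction along the
directions that decay like `e^{-2t}`. -/
noncomputable def neutralProj : Matrix (Fin 4) (Fin 4) ℝ :=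
  !![1, -(A2 d / (2 * d)), 0, 0; 0, 0, 0, 0; 0, 0, 0, 0; 0, 0, 0, 0]

lemma Phi_eq (t s : ℝ) :
    Phi d t s = neutralProj d + Real.exp (2 * (s - t)) • (1 - neutralProj d) := by
  have hexp : Real.exp (-2 * (t - s)) = Real.exp (2 * (s - t)) := by ring_nf
  rw [Phi, hexp]
  ext i j
  fin_cases i <;> fin_cases j <;> simp [neutralProj]
  ring

lemma exists_isExpBoundedKernel_PhiCLM : ∃ C, IsExpBoundedKernel 2 C (PhiCLM d) := by
  let P := LinearMap.toContinuousLinearMap (Matrix.toLin' (neutralProj d))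
  let Q := LinearMap.toContinuousLinearMap (Matrix.toLin' (1 - neutralProj d))
  have h : PhiCLM d = fun t s => P + Real.exp (2 * (s - t)) • Q := by
    funext t s
    rw [PhiCLM, Phi_eq, map_add, map_smul, map_add, map_smul]
  exact ⟨_, h ▸ isExpBoundedKernel_add_exp_smul zero_le_two P Q⟩

lemma Tmap_eq_tailMap (u v : ℝ → Fin 4 → ℝ) :
    Tmap d q u v = tailMap (PhiCLM d) (bfun d q) u v :=
  rfl

lemma Lop_eq_tailMapDeriv (v h : ℝ → Fin 4 → ℝ) :
    Lop d q v h = tailMapDeriv (PhiCLM d) (bfun d q) v h := by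
  funext t
  simp only [Lop, Db_mulVec]
  rfl

end Coefficients

lemma exists_pos_le_one_forall_mul_le {M ε : ℝ} (hM : 0 ≤ M) (hε : 0 < ε) :
    ∃ δ > (0 : ℝ), δ ≤ 1 ∧ ∀ x ≤ δ, M * x ≤ ε := by
  obtain ⟨c, hc, hMc⟩ := exists_pos_mul_lt hε M
  refine ⟨min 1 c, lt_min one_pos hc, min_le_left 1 c, fun x hx => ?_⟩
  exact (mul_le_mul_of_nonneg_left (hx.trans (min_le_right 1 c)) hM).trans hMc.le

theorem stmt8_general {E F : Type*} [NormedAddCommGroup E] [NormedSpace ℝ E]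
    [FiniteDimensional ℝ E] [NormedAddCommGroup F] [NormedSpace ℝ F] {ρ C : ℝ} (hρ : 0 < ρ)
    {Φ : ℝ → ℝ → F →L[ℝ] E} (hΦ : IsExpBoundedKernel ρ C Φ) {b : E → F} (hb : ContDiff ℝ 2 b)
    (hb₀ : b 0 = 0) (hb'₀ : fderiv ℝ b 0 = 0) (u : ℝ → E) {v : ℝ → E} (hv : MemExpDecay ρ v) :
    (∀ h, MemExpDecay ρ h → MemExpDecay ρ (tailMapDeriv Φ b v h)) ∧
    (∀ h₁ h₂, MemExpDecay ρ h₁ → MemExpDecay ρ h₂ → ∀ t ≥ (0 : ℝ),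
      tailMapDeriv Φ b v (h₁ + h₂) t = tailMapDeriv Φ b v h₁ t + tailMapDeriv Φ b v h₂ t) ∧
    (∀ (c : ℝ) (h) (t), tailMapDeriv Φ b v (c • h) t = c • tailMapDeriv Φ b v h t) ∧
    (∃ M : ℝ, ∀ h, MemExpDecay ρ h → ∀ t ≥ (0 : ℝ),
      Real.exp (ρ * t) * ‖tailMapDeriv Φ b v h t‖ ≤ M * expNorm ρ h) ∧
    (∀ ε > (0 : ℝ), ∃ δ > (0 : ℝ), ∀ h, MemExpDecay ρ h → expNorm ρ h ≤ δ → ∀ t ≥ (0 : ℝ),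
      Real.exp (ρ * t) *
          ‖tailMap Φ b u (v + h) t - tailMap Φ b u v t - tailMapDeriv Φ b v h t‖ ≤
        ε * expNorm ρ h) ∧
    (∀ ε > (0 : ℝ), ∃ δ > (0 : ℝ), ∀ v', MemExpDecay ρ v' → expNorm ρ (v' - v) ≤ δ →
      ∀ h, MemExpDecay ρ h → ∀ t ≥ (0 : ℝ),
        Real.exp (ρ * t) * ‖tailMapDeriv Φ b v' h t - tailMapDeriv Φ b v h t‖ ≤
          ε * expNorm ρ h) := by
  set R := expNorm ρ v + 1 with hR
  obtain ⟨K, hK⟩ := exists_vanishesQuadraticallyOn_closedBall hb hb₀ hb'₀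
    (add_nonneg (expNorm_nonneg ρ v) zero_le_one)
  have hvS : Set.MapsTo v (Set.Ici 0) (Metric.closedBall 0 R) :=
    hv.mapsTo_closedBall hρ.le (by simp [hR])
  have hvhS {h : ℝ → E} (hh : MemExpDecay ρ h) (hh1 : expNorm ρ h ≤ 1) :
      Set.MapsTo (v + h) (Set.Ici 0) (Metric.closedBall 0 R) :=
    (hv.add hh).mapsTo_closedBall hρ.le ((hv.expNorm_add_le hh).trans (by linarith))
  have hM : 0 ≤ C / ρ * K := mul_nonneg (div_nonneg hΦ.const_nonneg hρ.le) K.2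
  refine ⟨fun h hh => hΦ.memExpDecay_tailMapDeriv hρ hK hv hvS hh,
    fun h₁ h₂ hh₁ hh₂ t ht => hΦ.tailMapDeriv_add hρ hK hv hvS hh₁ hh₂ ht,
    fun c h t => tailMapDeriv_smul c,
    ⟨C / ρ * K * expNorm ρ v, fun h hh t ht =>
      (hΦ.exp_mul_norm_tailMapDeriv_le hρ hK hv hvS hh ht).trans_eq (by ring)⟩,
    fun ε hε => ?_, fun ε hε => ?_⟩
  all_goals obtain ⟨δ, hδ, hδ1, hMδ⟩ := exists_pos_le_one_forall_mul_le hM hε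
  · refine ⟨δ, hδ, fun h hh hhδ t ht => ?_⟩
    calc _ ≤ C / ρ * (K * expNorm ρ h * expNorm ρ h) :=
          hΦ.exp_mul_norm_tailMap_sub_sub_tailMapDeriv_le hρ hK hv hvS u hh
            (hvhS hh (hhδ.trans hδ1)) ht
      _ = C / ρ * K * expNorm ρ h * expNorm ρ h := by ring
      _ ≤ ε * expNorm ρ h := mul_le_mul_of_nonneg_right (hMδ _ hhδ) (expNorm_nonneg ρ h)
  · refine ⟨δ, hδ, fun v' hv' hvδ h hh t ht => ?_⟩
    have hv'S : Set.MapsTo v' (Set.Ici 0) (Metric.closedBall 0 R) := by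
      simpa using hvhS (hv'.sub hv) (hvδ.trans hδ1)
    calc _ ≤ C / ρ * (K * expNorm ρ (v' - v) * expNorm ρ h) :=
          hΦ.exp_mul_norm_tailMapDeriv_sub_le hρ hK hv hvS hv' hv'S hh ht
      _ = C / ρ * K * expNorm ρ (v' - v) * expNorm ρ h := by ring
      _ ≤ ε * expNorm ρ h := mul_le_mul_of_nonneg_right (hMδ _ hvδ) (expNorm_nonneg ρ h)

/-- If `r` and `0 < |u₀| < r` are small enough that `T_u` maps `B̄_r(u)` into itself, then
`T_u` is continuously Fréchet differentiable on the open ball `B_r(u)`, with derivative at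
`v` the bounded linear operator `h ↦ (t ↦ −∫_t^∞ Φ(t,s)·Db(v(s))·h(s) ds)` on `𝕍`. -/
theorem stmt8 (d : ℕ) (hd : 2 ≤ d) (q : ℝ) (y0 z0 w0 r : ℝ) (hr : 0 < r)
    (hu0 : 0 < ‖uZero d y0 z0 w0‖) (hu0r : ‖uZero d y0 z0 w0‖ < r)
    (hmap : ∀ v, inBall r (ufun d y0 z0 w0) v →
      inBall r (ufun d y0 z0 w0) (Tmap d q (ufun d y0 z0 w0) v)) :
    ∀ v, memV v → Vnorm (v - ufun d y0 z0 w0) < r →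
      -- `Lop v` maps `𝕍` into `𝕍` and is a linear operator
      (∀ h, memV h → memV (Lop d q v h)) ∧
      (∀ h1 h2, memV h1 → memV h2 →
        ∀ t ≥ (0:ℝ), Lop d q v (h1 + h2) t = Lop d q v h1 t + Lop d q v h2 t) ∧
      (∀ (c : ℝ) (h), memV h →
        ∀ t ≥ (0:ℝ), Lop d q v (c • h) t = c • Lop d q v h t) ∧
      -- `Lop v` is bounded
      (∃ K : ℝ, ∀ h, memV h →
        ∀ t ≥ (0:ℝ), Real.exp (2*t) * ‖Lop d q v h t‖ ≤ K * Vnorm h) ∧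
      -- `Lop v` is the Fréchet derivative of `T_u` at `v`
      (∀ ε > (0:ℝ), ∃ δ > (0:ℝ), ∀ h, memV h → Vnorm h ≤ δ →
        ∀ t ≥ (0:ℝ),
          Real.exp (2*t) * ‖Tmap d q (ufun d y0 z0 w0) (v + h) t
            - Tmap d q (ufun d y0 z0 w0) v t - Lop d q v h t‖ ≤ ε * Vnorm h) ∧
      -- the derivative depends continuously (in operator norm) on `v ∈ B_r(u)`
      (∀ ε > (0:ℝ), ∃ δ > (0:ℝ), ∀ v', memV v' → Vnorm (v' - ufun d y0 z0 w0) < r →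
        Vnorm (v' - v) ≤ δ → ∀ h, memV h →
          ∀ t ≥ (0:ℝ),
            Real.exp (2*t) * ‖Lop d q v' h t - Lop d q v h t‖ ≤ ε * Vnorm h) := by
  intro v hv _
  obtain ⟨C, hΦ⟩ := exists_isExpBoundedKernel_PhiCLM d
  obtain ⟨hmem, hadd, hsmul, hbdd, hderiv, hcont⟩ := stmt8_general two_pos hΦ
    (contDiff_bfun d q) (bfun_zero d q) (fderiv_bfun_zero d q) (ufun d y0 z0 w0) hv
  simp only [Lop_eq_tailMapDeriv, Tmap_eq_tailMap]
  exact ⟨hmem, hadd, fun c h _ t _ => hsmul c h t, hbdd, hderiv, fun ε hε =>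
    (hcont ε hε).imp fun _ hδ => ⟨hδ.1, fun v' hv' _ => hδ.2 v' hv'⟩⟩
end

section
/- Let d ≥ 2 be an integer, q ≠ 0 real, and let Λ₀ = Λ₀(q,d) > 0 be as in the preceding theorem. Let (X,Y,Z,W) be a maximally extended solution of (★) on (−∞, t_max) such that: (i) Y(t) > 0 and W(t) > 0 for all t; (ii) (X,Y,Z,W)(t) → (0,0,1,0) as t → −∞; (iii) the first integral equation holds with a constant 𝓒 > 0, where 𝓛 = g·Y and g(t) = λ·exp(∫_{−∞}^{t} X(τ)dτ) with λ > 0; (iv) lim_{t→−∞} W(t)/Y(t)² = 1; and (v) 𝓒λ² ≥ Λ₀. Then t_max = +∞, (X,Y,Z,W)(t) → (0,0,0,0) as t → +∞, and 𝓛(t) → 1/√𝓒 as t → +∞. -/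
open Filter Topology MeasureTheory

/-- `(X,Y,Z,W)` solves the nonlinear system (★) on the set `s`. -/
def StarSystem (d : ℕ) (q : ℝ) (X Y Z W : ℝ → ℝ) (s : Set ℝ) : Prop :=
  ∀ t ∈ s,
    HasDerivAt X
      (X t * ((d : ℝ) * X t^2 + Z t^2 - 1) + (A2 d / (d : ℝ)) * Y t^2
        - (2 * A3 d q / (d : ℝ)) * W t^2) t ∧
    HasDerivAt Y (Y t * ((d : ℝ) * X t^2 + Z t^2 - X t)) t ∧
    HasDerivAt Z (Z t * ((d : ℝ) * X t^2 + Z t^2 - 1) + A3 d q * W t^2) t ∧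
    HasDerivAt W (W t * ((d : ℝ) * X t^2 + Z t^2 - 2*X t + Z t)) t

/-!
The bound on `W² / Y²` turns the first integral into `d X² + Z² + d (d + 1) Y² + 𝓒 𝓛² ≤ 1`, which
confines the solution to a compact set, so that it is global. Since `(log 𝓛)' = d X² + Z² ≥ 0` and
`𝓛` is bounded, `log 𝓛` converges, and Barbalat's lemma forces `d X² + Z² → 0`. As `X ≥ 0`, the
function `g = 𝓛 / Y` is monotone: either it diverges, so that `Y → 0`, or `Y` has a positive limit,
and then `X' ≥ X (d X² + Z² - 1) + d Y²` would force `X → ∞`. Hence `Y → 0`, then `W → 0`, and the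
first integral gives `𝓒 𝓛² → 1`.
-/

section RealAnalysis

open Set

variable {E : Type*} [NormedAddCommGroup E] [NormedSpace ℝ E]

theorem norm_image_add_sub_sub_smul_le {f f' : ℝ → E} (hf : ∀ t, HasDerivAt f (f' t) t) {t h c : ℝ}
    (hh : 0 ≤ h) (hbound : ∀ s ∈ Icc t (t + h), ‖f' s - f' t‖ ≤ c) :
    ‖f (t + h) - f t - h • f' t‖ ≤ c * h := by
  have hderiv (s : ℝ) : HasDerivAt (fun s ↦ f s - s • f' t) (f' s - f' t) s :=
    ((hf s).sub ((hasDerivAt_id s).smul_const (f' t))).congr_deriv (by simp)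
  have hmvt := (convex_Icc t (t + h)).norm_image_sub_le_of_norm_hasDerivWithin_le
    (fun s _ ↦ (hderiv s).hasDerivWithinAt) hbound
    (left_mem_Icc.mpr (by linarith)) (right_mem_Icc.mpr (by linarith))
  rw [add_sub_cancel_left, Real.norm_of_nonneg hh] at hmvt
  convert hmvt using 2
  module

-- Barbalat's lemma.
theorem tendsto_zero_of_uniformContinuous_of_hasDerivAt {f f' : ℝ → E} {l : E}
    (hf : ∀ t, HasDerivAt f (f' t) t) (hl : Tendsto f atTop (𝓝 l)) (hf' : UniformContinuous f') :
    Tendsto f' atTop (𝓝 0) := by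
  rw [Metric.tendsto_atTop]
  intro ε hε
  obtain ⟨δ, hδ, hclose⟩ := Metric.uniformContinuous_iff.mp hf' (ε / 2) (half_pos hε)
  set h := δ / 2
  have hh_pos : 0 < h := half_pos hδ
  have hlinear (t : ℝ) : ‖f (t + h) - f t - h • f' t‖ ≤ ε / 2 * h := by
    refine norm_image_add_sub_sub_smul_le hf hh_pos.le fun s hs ↦ ?_
    rw [← dist_eq_norm]
    refine (hclose ?_).le
    rw [Real.dist_eq, abs_of_nonneg (sub_nonneg.mpr hs.1)]
    exact (sub_le_iff_le_add'.mpr hs.2).trans_lt (half_lt_self hδ)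
  have hdiff : Tendsto (fun t ↦ f (t + h) - f t) atTop (𝓝 0) := by
    simpa using (hl.comp (tendsto_atTop_add_const_right atTop h tendsto_id)).sub hl
  obtain ⟨N, hN⟩ := Metric.tendsto_atTop.mp hdiff (ε / 2 * h) (by positivity)
  refine ⟨N, fun t ht ↦ ?_⟩
  have hsmall : ‖f (t + h) - f t‖ < ε / 2 * h := by simpa using hN t ht
  have hscaled : h * ‖f' t‖ < h * ε := calc
    h * ‖f' t‖ = ‖h • f' t‖ := by rw [norm_smul, Real.norm_of_nonneg hh_pos.le]
    _ ≤ ‖f (t + h) - f t‖ + ‖f (t + h) - f t - h • f' t‖ := norm_le_norm_add_norm_sub _ _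
    _ < h * ε := by linarith [hlinear t]
  simpa using lt_of_mul_lt_mul_left hscaled hh_pos.le

theorem tendsto_atTop_of_eventually_le_deriv {f f' : ℝ → ℝ} {c : ℝ} (hc : 0 < c)
    (hf : ∀ᶠ t in atTop, HasDerivAt f (f' t) t) (hf' : ∀ᶠ t in atTop, c ≤ f' t) :
    Tendsto f atTop atTop := by
  obtain ⟨N, hN⟩ := eventually_atTop.mp (hf.and hf')
  have hgrowth : ∀ t ≥ N, c * (t - N) ≤ f t - f N := fun t ht ↦
    (convex_Ici N).mul_sub_le_image_sub_of_le_deriv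
      (fun s hs ↦ (hN s hs).1.continuousAt.continuousWithinAt)
      (fun s hs ↦ (hN s (interior_subset hs)).1.differentiableAt.differentiableWithinAt)
      (fun s hs ↦ (hN s (interior_subset hs)).1.deriv ▸ (hN s (interior_subset hs)).2)
      N self_mem_Ici t ht ht
  have hline : Tendsto (fun t ↦ c * (t - N) + f N) atTop atTop :=
    tendsto_atTop_add_const_right _ _
      ((tendsto_atTop_add_const_right _ (-N) tendsto_id).const_mul_atTop hc)
  exact tendsto_atTop_mono' _
    ((eventually_ge_atTop N).mono fun t ht ↦ by linarith [hgrowth t ht]) hline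

theorem le_of_tendsto_atBot_of_deriv_pos {f f' : ℝ → ℝ} {a : ℝ} (hf : ∀ t, HasDerivAt f (f' t) t)
    (ha : Tendsto f atBot (𝓝 a)) (hpos : ∀ t, f t < a → 0 < f' t) (t : ℝ) : a ≤ f t := by
  by_contra! ht
  obtain ⟨c, htc, hca⟩ := exists_between ht
  obtain ⟨N, hN, hNt⟩ := ((ha.eventually_const_lt hca).and (eventually_le_atBot t)).exists
  -- `f` starts above the level `c` and is increasing whenever it meets it.
  have hbarrier : -f t ≤ -c :=
    image_le_of_deriv_right_lt_deriv_boundary (f := fun s ↦ -f s) (B := fun _ ↦ -c)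
      (fun s _ ↦ (hf s).neg.continuousAt.continuousWithinAt)
      (fun s _ ↦ (hf s).neg.hasDerivWithinAt) (neg_le_neg hN.le) (fun s ↦ hasDerivAt_const s (-c))
      (fun s _ hs ↦ neg_lt_zero.mpr (hpos s (by linarith))) (right_mem_Icc.mpr hNt)
  linarith

theorem hasDerivAt_integral_Iic [CompleteSpace E] {f : ℝ → E} (hf : Continuous f)
    (hint : ∀ t, IntegrableOn f (Iic t)) (t : ℝ) :
    HasDerivAt (fun t ↦ ∫ s in Iic t, f s) (f t) t := by
  have hsplit : (fun t ↦ ∫ s in Iic t, f s) =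
      fun t ↦ (∫ s in Iic (0 : ℝ), f s) + ∫ s in (0 : ℝ)..t, f s := by
    funext r
    rw [← intervalIntegral.integral_Iic_sub_Iic (hint 0) (hint r), add_sub_cancel]
  rw [hsplit]
  exact (hf.integral_hasStrictDerivAt 0 t).hasDerivAt.const_add _

theorem tendsto_zero_of_sq_le {ι : Type*} {l : Filter ι} {f g : ι → ℝ}
    (h : ∀ t, f t ^ 2 ≤ g t) (hg : Tendsto g l (𝓝 0)) : Tendsto f l (𝓝 0) :=
  squeeze_zero_norm (fun t ↦ Real.abs_le_sqrt (h t)) (by simpa using hg.sqrt)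

end RealAnalysis

section IntegralCurve

open Set

theorem exists_tendsto_nhdsWithin_of_uniformContinuousOn {α β : Type*} [UniformSpace α]
    [UniformSpace β] [CompleteSpace β] {f : α → β} {s : Set α} {x : α} [(𝓝[s] x).NeBot]
    (hf : UniformContinuousOn f s) : ∃ y, Tendsto f (𝓝[s] x) (𝓝 y) :=
  cauchy_map_iff_exists_tendsto.mp
    (((cauchy_nhds (a := x)).mono (g := 𝓝[s] x) inf_le_left).map_of_le hf inf_le_right)

variable {E : Type*} [NormedAddCommGroup E] [NormedSpace ℝ E] {F : E → E} {v : ℝ → E → E}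
  {K : Set E} {γ : ℝ → E} {s : Set ℝ} {T b : ℝ}

theorem exists_lipschitzOnWith_of_isIntegralCurveOn (hF : ContinuousOn F K) (hK : IsCompact K)
    (hs : Convex ℝ s) (hγ : IsIntegralCurveOn γ (fun _ ↦ F) s) (hγK : MapsTo γ s K) :
    ∃ M, LipschitzOnWith M γ s := by
  obtain ⟨M, hM⟩ := hK.exists_bound_of_continuousOn hF
  refine ⟨M.toNNReal, hs.lipschitzOnWith_of_nnnorm_hasDerivWithin_le hγ fun t ht ↦ ?_⟩
  rw [← NNReal.coe_le_coe]
  exact (hM _ (hγK ht)).trans (Real.le_coe_toNNReal M)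

theorem uniformContinuousOn_comp_of_isIntegralCurveOn {β : Type*} [UniformSpace β] {g : E → β}
    (hg : ContinuousOn g K) (hF : ContinuousOn F K) (hK : IsCompact K) (hs : Convex ℝ s)
    (hγ : IsIntegralCurveOn γ (fun _ ↦ F) s) (hγK : MapsTo γ s K) :
    UniformContinuousOn (fun t ↦ g (γ t)) s := by
  obtain ⟨M, hM⟩ := exists_lipschitzOnWith_of_isIntegralCurveOn hF hK hs hγ hγK
  exact (hK.uniformContinuousOn_of_continuous hg).comp hM.uniformContinuousOn hγK

theorem isIntegralCurveOn_Iic_of_Iio (hF : ContinuousAt F (γ T))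
    (hγ : IsIntegralCurveOn γ (fun _ ↦ F) (Iio T)) (hlim : Tendsto γ (𝓝[<] T) (𝓝 (γ T))) :
    IsIntegralCurveOn γ (fun _ ↦ F) (Iic T) := by
  have hderiv : ∀ t < T, HasDerivAt γ (F (γ t)) t := fun t ht ↦
    (hγ t ht).hasDerivAt (Iio_mem_nhds ht)
  intro t ht
  rcases (show t ≤ T from ht).lt_or_eq with hlt | rfl
  · exact (hderiv t hlt).hasDerivWithinAt
  · exact hasDerivWithinAt_Iic_of_tendsto_deriv
      (fun r hr ↦ (hderiv r hr).differentiableAt.differentiableWithinAt) hlim self_mem_nhdsWithin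
      ((hF.tendsto.comp hlim).congr'
        (eventually_nhdsWithin_of_forall fun r hr ↦ (hderiv r hr).deriv.symm))

theorem isIntegralCurveOn_Iio_of_Iic_of_Ico (hleft : IsIntegralCurveOn γ v (Iic T))
    (hright : IsIntegralCurveOn γ v (Ico T b)) : IsIntegralCurveOn γ v (Iio b) := by
  intro t (htb : t < b)
  rcases lt_trichotomy t T with hlt | rfl | hgt
  · exact ((hleft t hlt.le).hasDerivAt (Iic_mem_nhds hlt)).hasDerivWithinAt
  · exact ((hleft t self_mem_Iic).union (hright t ⟨le_rfl, htb⟩)).mono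
      fun r hr ↦ (le_or_gt r t).imp id fun h ↦ ⟨h.le, hr⟩
  · exact ((hright t ⟨hgt.le, htb⟩).hasDerivAt (Ico_mem_nhds hgt htb)).hasDerivWithinAt

theorem exists_isIntegralCurveOn_extension [CompleteSpace E] (hF : ContDiff ℝ 1 F)
    (hK : IsCompact K) (hγ : IsIntegralCurveOn γ (fun _ ↦ F) (Iio T)) (hγK : MapsTo γ (Iio T) K) :
    ∃ b > T, ∃ γ' : ℝ → E, IsIntegralCurveOn γ' (fun _ ↦ F) (Iio b) ∧ EqOn γ' γ (Iio T) := by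
  obtain ⟨M, hM⟩ := exists_lipschitzOnWith_of_isIntegralCurveOn hF.continuous.continuousOn hK
    (convex_Iio T) hγ hγK
  obtain ⟨x, hx⟩ := exists_tendsto_nhdsWithin_of_uniformContinuousOn (x := T) hM.uniformContinuousOn
  obtain ⟨α, hαT, ε, hε, hα⟩ :=
    hF.contDiffAt.exists_forall_mem_closedBall_exists_eq_forall_mem_Ioo_hasDerivAt₀ (x₀ := x) T
  classical
  set γ' : ℝ → E := (Iio T).piecewise γ α
  have hγ'γ : EqOn γ' γ (Iio T) := piecewise_eqOn _ _ _
  have hγ'α : EqOn γ' α (Ici T) := fun t ht ↦ piecewise_eq_of_notMem _ _ _ (notMem_Iio.mpr ht)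
  have hγ'T : γ' T = x := (hγ'α self_mem_Ici).trans hαT
  have hlim : Tendsto γ' (𝓝[<] T) (𝓝 (γ' T)) := by
    rw [hγ'T]
    exact hx.congr' (eventually_nhdsWithin_of_forall fun t ht ↦ (hγ'γ ht).symm)
  have hIio : IsIntegralCurveOn γ' (fun _ ↦ F) (Iio T) := fun t ht ↦ by
    rw [hγ'γ ht]
    exact (hγ t ht).congr hγ'γ (hγ'γ ht)
  have hIco : IsIntegralCurveOn γ' (fun _ ↦ F) (Ico T (T + ε)) := fun t ht ↦ by
    rw [hγ'α ht.1]
    exact (hα t ⟨by linarith [ht.1], ht.2⟩).hasDerivWithinAt.congr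
      (fun r hr ↦ hγ'α hr.1) (hγ'α ht.1)
  exact ⟨T + ε, by linarith, γ', isIntegralCurveOn_Iio_of_Iic_of_Ico
    (isIntegralCurveOn_Iic_of_Iio hF.continuous.continuousAt hIio hlim) hIco, hγ'γ⟩

end IntegralCurve

section TrappingRegion

variable {d : ℕ} {q : ℝ} {x y z w : ℝ}

theorem A3_pos (hd : 0 < d) (hq : q ≠ 0) : 0 < A3 d q := by
  unfold A3
  positivity

theorem A2_div_self (hd : 0 < d) : A2 d / d = d + 2 := by
  unfold A2
  field_simp

theorem A2_div_A3_mul (d : ℕ) (q : ℝ) : A2 d / (A3 d q * (d + 2)) = d / A3 d q := by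
  unfold A2
  exact mul_div_mul_right _ _ (by positivity)

/-- The vector field whose integral curves `t ↦ (X t, Y t, Z t, W t)` are the solutions of (★). -/
noncomputable def starField (d : ℕ) (q : ℝ) (p : ℝ × ℝ × ℝ × ℝ) : ℝ × ℝ × ℝ × ℝ :=
  let (x, y, z, w) := p
  (x * (d * x ^ 2 + z ^ 2 - 1) + A2 d / d * y ^ 2 - 2 * A3 d q / d * w ^ 2,
    y * (d * x ^ 2 + z ^ 2 - x),
    z * (d * x ^ 2 + z ^ 2 - 1) + A3 d q * w ^ 2,
    w * (d * x ^ 2 + z ^ 2 - 2 * x + z))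

theorem contDiff_starField (d : ℕ) (q : ℝ) : ContDiff ℝ 1 (starField d q) := by
  unfold starField
  fun_prop

/-- The points `(x, y, z, w)` to which the first integral confines a solution of (★) that obeys
`W² / Y² ≤ A₂ / (A₃ (d + 2)) = d / A₃`. The second condition is that ratio bound, cleared of
denominators; the first is what remains of the first integral once `A₃ w²` is bounded by `d y²`
and the term `𝓒 𝓛²` is dropped. -/
def trappingRegion (d : ℕ) (q : ℝ) : Set (ℝ × ℝ × ℝ × ℝ) :=
  {(x, y, z, w) | d * x ^ 2 + z ^ 2 + d * (d + 1) * y ^ 2 ≤ 1 ∧ A3 d q * w ^ 2 ≤ d * y ^ 2}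

theorem mul_sq_le_of_sq_div_sq_le (hd : 0 < d) (hq : q ≠ 0) (hy : 0 < y)
    (hratio : w ^ 2 / y ^ 2 ≤ A2 d / (A3 d q * (d + 2))) : A3 d q * w ^ 2 ≤ d * y ^ 2 := by
  rw [A2_div_A3_mul, div_le_div_iff₀ (by positivity) (A3_pos hd hq)] at hratio
  linarith

theorem mem_trappingRegion_of_firstIntegral {c : ℝ} (hc : 0 ≤ c)
    (hfirst : d * x ^ 2 + A2 d * y ^ 2 + z ^ 2 - A3 d q * w ^ 2 = 1 - c)
    (hratio : A3 d q * w ^ 2 ≤ d * y ^ 2) : (x, y, z, w) ∈ trappingRegion d q := by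
  unfold A2 at hfirst
  exact ⟨by linarith, hratio⟩

theorem le_one_of_firstIntegral {c : ℝ}
    (hfirst : d * x ^ 2 + A2 d * y ^ 2 + z ^ 2 - A3 d q * w ^ 2 = 1 - c)
    (hratio : A3 d q * w ^ 2 ≤ d * y ^ 2) : c ≤ 1 := by
  have hnonneg : 0 ≤ d * x ^ 2 + z ^ 2 + d * (d + 1) * y ^ 2 := by positivity
  unfold A2 at hfirst
  linarith

theorem speed_le_one_of_mem_trappingRegion (h : (x, y, z, w) ∈ trappingRegion d q) :
    d * x ^ 2 + z ^ 2 ≤ 1 := by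
  have hy : 0 ≤ d * (d + 1) * y ^ 2 := by positivity
  linarith [h.1]

theorem sq_le_of_mem_trappingRegion (hd : 0 < d) (hq : q ≠ 0)
    (h : (x, y, z, w) ∈ trappingRegion d q) :
    x ^ 2 ≤ 1 ∧ y ^ 2 ≤ 1 ∧ z ^ 2 ≤ 1 ∧ w ^ 2 ≤ 1 / A3 d q := by
  obtain ⟨henergy, hratio⟩ := h
  have hd1 : (1 : ℝ) ≤ d := by exact_mod_cast hd
  have hx : x ^ 2 ≤ d * x ^ 2 := le_mul_of_one_le_left (sq_nonneg x) hd1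
  have hy : y ^ 2 ≤ d * y ^ 2 := le_mul_of_one_le_left (sq_nonneg y) hd1
  have hdy : d * y ^ 2 ≤ d * (d + 1) * y ^ 2 := by
    gcongr
    nlinarith
  refine ⟨by linarith [sq_nonneg y, sq_nonneg z], by linarith [sq_nonneg x, sq_nonneg z],
    by linarith [sq_nonneg x, sq_nonneg y], ?_⟩
  rw [le_div_iff₀' (A3_pos hd hq)]
  linarith [sq_nonneg x, sq_nonneg z]

theorem isCompact_trappingRegion (hd : 0 < d) (hq : q ≠ 0) : IsCompact (trappingRegion d q) := by
  have hclosed : IsClosed (trappingRegion d q) := by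
    have hinter : trappingRegion d q =
        {p | (d : ℝ) * p.1 ^ 2 + p.2.2.1 ^ 2 + d * (d + 1) * p.2.1 ^ 2 ≤ 1} ∩
          {p | A3 d q * p.2.2.2 ^ 2 ≤ (d : ℝ) * p.2.1 ^ 2} := rfl
    rw [hinter]
    exact (isClosed_le (by fun_prop) (by fun_prop)).inter (isClosed_le (by fun_prop) (by fun_prop))
  set r := √(1 / A3 d q)
  refine (isCompact_Icc (a := (-1, -1, -1, -r)) (b := (1, 1, 1, r))).of_isClosed_subset hclosed ?_
  rintro ⟨x, y, z, w⟩ h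
  obtain ⟨hx, hy, hz, hw⟩ := sq_le_of_mem_trappingRegion hd hq h
  obtain ⟨hx₁, hx₂⟩ := abs_le.mp ((sq_le_one_iff_abs_le_one x).mp hx)
  obtain ⟨hy₁, hy₂⟩ := abs_le.mp ((sq_le_one_iff_abs_le_one y).mp hy)
  obtain ⟨hz₁, hz₂⟩ := abs_le.mp ((sq_le_one_iff_abs_le_one z).mp hz)
  obtain ⟨hw₁, hw₂⟩ := abs_le.mp (Real.abs_le_sqrt hw)
  exact ⟨⟨hx₁, hy₁, hz₁, hw₁⟩, ⟨hx₂, hy₂, hz₂, hw₂⟩⟩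

theorem le_starField_fst_of_mem_trappingRegion (hd : 0 < d)
    (h : (x, y, z, w) ∈ trappingRegion d q) :
    x * (d * x ^ 2 + z ^ 2 - 1) + d * y ^ 2 ≤ (starField d q (x, y, z, w)).1 := by
  have hw : 2 * A3 d q / d * w ^ 2 ≤ 2 * y ^ 2 := by
    rw [div_mul_eq_mul_div, div_le_iff₀ (by exact_mod_cast hd)]
    linarith [h.2]
  simp only [starField, A2_div_self hd]
  linarith

end TrappingRegion

/-- The function `𝓛 = g Y`, where `g(t) = λ exp (∫_{-∞}^t X)`. -/
noncomputable def scaledY (lam : ℝ) (X Y : ℝ → ℝ) (t : ℝ) : ℝ :=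
  lam * Real.exp (∫ τ in Set.Iic t, X τ) * Y t

theorem scaledY_pos {lam t : ℝ} {X Y : ℝ → ℝ} (hlam : 0 < lam) (hY : 0 < Y t) :
    0 < scaledY lam X Y t := by
  unfold scaledY
  positivity

namespace StarSystem

open Set

variable {d : ℕ} {q : ℝ} {X Y Z W : ℝ → ℝ}

theorem iff_isIntegralCurveOn {s : Set ℝ} (hs : IsOpen s) :
    StarSystem d q X Y Z W s ↔
      IsIntegralCurveOn (fun t ↦ (X t, Y t, Z t, W t)) (fun _ ↦ starField d q) s := by
  refine forall₂_congr fun t ht ↦ ⟨fun ⟨hX, hY, hZ, hW⟩ ↦ ?_, fun h ↦ ?_⟩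
  · exact (hX.prodMk (hY.prodMk (hZ.prodMk hW))).hasDerivWithinAt
  · have hp := (h.hasDerivAt (hs.mem_nhds ht)).hasFDerivAt
    exact ⟨hp.fst.hasDerivAt.congr_deriv (by simp [starField]),
      hp.snd.fst.hasDerivAt.congr_deriv (by simp [starField]),
      hp.snd.snd.fst.hasDerivAt.congr_deriv (by simp [starField]),
      hp.snd.snd.snd.hasDerivAt.congr_deriv (by simp [starField])⟩

theorem exists_extension {T : ℝ} (h : StarSystem d q X Y Z W (Iio T))
    {K : Set (ℝ × ℝ × ℝ × ℝ)} (hK : IsCompact K) (hmem : ∀ t < T, (X t, Y t, Z t, W t) ∈ K) :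
    ∃ b > T, ∃ X' Y' Z' W' : ℝ → ℝ, StarSystem d q X' Y' Z' W' (Iio b) ∧
      ∀ t < T, X' t = X t ∧ Y' t = Y t ∧ Z' t = Z t ∧ W' t = W t := by
  obtain ⟨b, hb, γ, hγ, heq⟩ := exists_isIntegralCurveOn_extension (contDiff_starField d q) hK
    ((iff_isIntegralCurveOn isOpen_Iio).mp h) hmem
  exact ⟨b, hb, fun t ↦ (γ t).1, fun t ↦ (γ t).2.1, fun t ↦ (γ t).2.2.1, fun t ↦ (γ t).2.2.2,
    (iff_isIntegralCurveOn isOpen_Iio).mpr hγ, fun t ht ↦ by simp [heq ht]⟩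

theorem eq_top_of_maximal {tmax : EReal} (h : StarSystem d q X Y Z W {t : ℝ | (t : EReal) < tmax})
    {K : Set (ℝ × ℝ × ℝ × ℝ)} (hK : IsCompact K)
    (hmem : ∀ t : ℝ, (t : EReal) < tmax → (X t, Y t, Z t, W t) ∈ K)
    (hmax : ∀ tmax' : EReal, tmax < tmax' →
      ¬ ∃ X' Y' Z' W' : ℝ → ℝ,
        StarSystem d q X' Y' Z' W' {t : ℝ | (t : EReal) < tmax'} ∧
        ∀ t : ℝ, (t : EReal) < tmax →
          X' t = X t ∧ Y' t = Y t ∧ Z' t = Z t ∧ W' t = W t) :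
    tmax = ⊤ := by
  induction tmax using EReal.rec with
  | bot =>
    -- The zero solution extends the empty one.
    refine absurd ⟨0, 0, 0, 0, fun t _ ↦ ?_, fun t ht ↦ absurd ht not_lt_bot⟩ (hmax ⊤ bot_lt_top)
    simp
  | top => rfl
  | coe T =>
    simp only [EReal.coe_lt_coe_iff] at h hmem hmax
    obtain ⟨b, hb, X', Y', Z', W', hsol, heq⟩ := h.exists_extension hK hmem
    refine absurd ⟨X', Y', Z', W', ?_, heq⟩ (hmax b (EReal.coe_lt_coe_iff.mpr hb))
    simpa only [EReal.coe_lt_coe_iff] using! hsol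

section Global

variable (h : StarSystem d q X Y Z W univ)

include h

theorem continuous_X : Continuous X :=
  continuous_iff_continuousAt.mpr fun t ↦ (h t trivial).1.continuousAt

theorem hasDerivAt_scaledY (hint : ∀ t, IntegrableOn X (Iic t)) (lam t : ℝ) :
    HasDerivAt (scaledY lam X Y) (scaledY lam X Y t * (d * X t ^ 2 + Z t ^ 2)) t := by
  have hg := (hasDerivAt_integral_Iic h.continuous_X hint t).exp.const_mul lam
  refine (hg.mul (h t trivial).2.1).congr_deriv ?_
  unfold scaledY
  ring

theorem exists_tendsto_scaledY (hint : ∀ t, IntegrableOn X (Iic t)) (hY : ∀ t, 0 < Y t)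
    {lam C : ℝ} (hlam : 0 < lam) (hC : 0 < C) (hbound : ∀ t, C * scaledY lam X Y t ^ 2 ≤ 1) :
    ∃ l > 0, Tendsto (scaledY lam X Y) atTop (𝓝 l) := by
  have hpos (t : ℝ) : 0 < scaledY lam X Y t := scaledY_pos hlam (hY t)
  have hmono : Monotone (scaledY lam X Y) :=
    monotone_of_hasDerivAt_nonneg (h.hasDerivAt_scaledY hint lam) fun t ↦
      mul_nonneg (hpos t).le (by positivity)
  have hle (t : ℝ) : scaledY lam X Y t ≤ √(1 / C) :=
    Real.le_sqrt_of_sq_le ((le_div_iff₀' hC).mpr (hbound t))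
  have hlim := tendsto_atTop_ciSup hmono ⟨_, forall_mem_range.mpr hle⟩
  exact ⟨_, (hpos 0).trans_le (hmono.ge_of_tendsto hlim 0), hlim⟩

section Trapped

variable (hmem : ∀ t, (X t, Y t, Z t, W t) ∈ trappingRegion d q)

include hmem

theorem uniformContinuous_speed (hd : 0 < d) (hq : q ≠ 0) :
    UniformContinuous fun t ↦ d * X t ^ 2 + Z t ^ 2 := by
  have hg : Continuous fun p : ℝ × ℝ × ℝ × ℝ ↦ (d : ℝ) * p.1 ^ 2 + p.2.2.1 ^ 2 := by fun_prop
  have hcurve := (iff_isIntegralCurveOn isOpen_univ).mp h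
  have hcomp := uniformContinuousOn_comp_of_isIntegralCurveOn
    hg.continuousOn (contDiff_starField d q).continuous.continuousOn
    (isCompact_trappingRegion hd hq) convex_univ hcurve fun t _ ↦ hmem t
  exact uniformContinuousOn_univ.mp hcomp

theorem X_nonneg (hd : 0 < d) (hY : ∀ t, 0 < Y t) (hX : Tendsto X atBot (𝓝 0)) (t : ℝ) :
    0 ≤ X t := by
  refine le_of_tendsto_atBot_of_deriv_pos (fun t ↦ (h t trivial).1) hX (fun t ht ↦ ?_) t
  have hderiv := le_starField_fst_of_mem_trappingRegion hd (hmem t)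
  have hspeed := speed_le_one_of_mem_trappingRegion (hmem t)
  have hdrift : 0 ≤ X t * (d * X t ^ 2 + Z t ^ 2 - 1) :=
    mul_nonneg_of_nonpos_of_nonpos ht.le (by linarith)
  have hsource : 0 < d * Y t ^ 2 := by
    have := hY t
    positivity
  have hpos : 0 < (starField d q (X t, Y t, Z t, W t)).1 := by linarith
  exact hpos

theorem tendsto_speed_atTop (hd : 0 < d) (hq : q ≠ 0) (hint : ∀ t, IntegrableOn X (Iic t))
    (hY : ∀ t, 0 < Y t) {lam l : ℝ} (hlam : 0 < lam) (hl : 0 < l)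
    (hlim : Tendsto (scaledY lam X Y) atTop (𝓝 l)) :
    Tendsto (fun t ↦ d * X t ^ 2 + Z t ^ 2) atTop (𝓝 0) := by
  have hlog (t : ℝ) :
      HasDerivAt (fun t ↦ Real.log (scaledY lam X Y t)) (d * X t ^ 2 + Z t ^ 2) t := by
    have hne : scaledY lam X Y t ≠ 0 := (scaledY_pos hlam (hY t)).ne'
    simpa [hne] using (h.hasDerivAt_scaledY hint lam t).log hne
  exact tendsto_zero_of_uniformContinuous_of_hasDerivAt hlog (hlim.log hl.ne')
    (h.uniformContinuous_speed hmem hd hq)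

theorem limit_Y_eq_zero (hd : 0 < d) (hX : Tendsto X atTop (𝓝 0))
    (hspeed : Tendsto (fun t ↦ d * X t ^ 2 + Z t ^ 2) atTop (𝓝 0)) {y : ℝ}
    (hy : Tendsto Y atTop (𝓝 y)) : y = 0 := by
  by_contra hne
  have hlower : Tendsto (fun t ↦ X t * (d * X t ^ 2 + Z t ^ 2 - 1) + d * Y t ^ 2) atTop
      (𝓝 (d * y ^ 2)) := by
    simpa using (hX.mul (hspeed.sub_const 1)).add ((hy.pow 2).const_mul (d : ℝ))
  have hpos : 0 < d * y ^ 2 := by positivity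
  have hderiv : ∀ᶠ t in atTop, d * y ^ 2 / 2 ≤ (starField d q (X t, Y t, Z t, W t)).1 :=
    (hlower.eventually_const_le (half_lt_self hpos)).mono fun t ht ↦
      ht.trans (le_starField_fst_of_mem_trappingRegion hd (hmem t))
  exact not_tendsto_nhds_of_tendsto_atTop
    (tendsto_atTop_of_eventually_le_deriv (half_pos hpos) (.of_forall fun t ↦ (h t trivial).1)
      hderiv) 0 hX

theorem tendsto_Y_atTop (hd : 0 < d) (hint : ∀ t, IntegrableOn X (Iic t))
    (hX_nonneg : ∀ t, 0 ≤ X t) {lam l : ℝ} (hlam : 0 < lam)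
    (hlim : Tendsto (scaledY lam X Y) atTop (𝓝 l)) (hX : Tendsto X atTop (𝓝 0))
    (hspeed : Tendsto (fun t ↦ d * X t ^ 2 + Z t ^ 2) atTop (𝓝 0)) :
    Tendsto Y atTop (𝓝 0) := by
  set G : ℝ → ℝ := fun t ↦ ∫ τ in Iic t, X τ
  have hYeq : Y = fun t ↦ scaledY lam X Y t / (lam * Real.exp (G t)) := by
    funext t
    rw [eq_div_iff (by positivity), scaledY, mul_comm]
  have hGmono : Monotone G :=
    monotone_of_hasDerivAt_nonneg (hasDerivAt_integral_Iic h.continuous_X hint) hX_nonneg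
  rcases tendsto_atTop_of_monotone hGmono with hGtop | ⟨m, hm⟩
  · rw [hYeq]
    exact hlim.div_atTop ((Real.tendsto_exp_atTop.comp hGtop).const_mul_atTop hlam)
  · have hYlim : Tendsto Y atTop (𝓝 (l / (lam * Real.exp m))) := by
      rw [hYeq]
      exact hlim.div (hm.rexp.const_mul lam) (by positivity)
    rwa [h.limit_Y_eq_zero hmem hd hX hspeed hYlim] at hYlim

end Trapped

end Global

end StarSystem

section Limits

variable {d : ℕ} {q : ℝ} {ι : Type*} {l : Filter ι} {X Y Z W : ι → ℝ}

theorem tendsto_W_of_mul_sq_le (hd : 0 < d) (hq : q ≠ 0)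
    (hratio : ∀ t, A3 d q * W t ^ 2 ≤ d * Y t ^ 2) (hY : Tendsto Y l (𝓝 0)) :
    Tendsto W l (𝓝 0) := by
  refine tendsto_zero_of_sq_le (g := fun t ↦ d * Y t ^ 2 / A3 d q)
    (fun t ↦ (le_div_iff₀' (A3_pos hd hq)).mpr (hratio t)) ?_
  simpa using ((hY.pow 2).const_mul (d : ℝ)).div_const (A3 d q)

theorem tendsto_one_div_sqrt_of_firstIntegral {L : ι → ℝ} {C : ℝ} (hC : 0 < C) (hL : ∀ t, 0 ≤ L t)
    (hfirst : ∀ t, d * X t ^ 2 + A2 d * Y t ^ 2 + Z t ^ 2 - A3 d q * W t ^ 2 = 1 - C * L t ^ 2)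
    (hX : Tendsto X l (𝓝 0)) (hY : Tendsto Y l (𝓝 0)) (hZ : Tendsto Z l (𝓝 0))
    (hW : Tendsto W l (𝓝 0)) : Tendsto L l (𝓝 (1 / √C)) := by
  have hleft : Tendsto (fun t ↦ d * X t ^ 2 + A2 d * Y t ^ 2 + Z t ^ 2 - A3 d q * W t ^ 2) l
      (𝓝 0) := by
    simpa using ((((hX.pow 2).const_mul (d : ℝ)).add ((hY.pow 2).const_mul (A2 d))).add
      (hZ.pow 2)).sub ((hW.pow 2).const_mul (A3 d q))
  have hsq : Tendsto (fun t ↦ L t ^ 2) l (𝓝 (1 / C)) := by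
    have hquot := (hleft.const_sub 1).div_const C
    rw [sub_zero] at hquot
    refine hquot.congr fun t ↦ ?_
    rw [hfirst t]
    field_simp
    ring
  simpa [Real.sqrt_sq (hL _)] using hsq.sqrt

end Limits

theorem stmt17_general {d : ℕ} (hd : 0 < d) {q : ℝ} (hq : q ≠ 0) {tmax : EReal}
    {X Y Z W : ℝ → ℝ} (hode : StarSystem d q X Y Z W {t : ℝ | (t : EReal) < tmax})
    (hY : ∀ t : ℝ, (t : EReal) < tmax → 0 < Y t) (hlimX : Tendsto X atBot (𝓝 0))
    {lam C : ℝ} (hlam : 0 < lam) (hC : 0 < C)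
    (hint : ∀ t : ℝ, (t : EReal) < tmax → IntegrableOn X (Set.Iic t))
    (hfirst : ∀ t : ℝ, (t : EReal) < tmax →
      d * X t ^ 2 + A2 d * Y t ^ 2 + Z t ^ 2 - A3 d q * W t ^ 2 = 1 - C * scaledY lam X Y t ^ 2)
    (hratio : ∀ t : ℝ, (t : EReal) < tmax → W t ^ 2 / Y t ^ 2 ≤ A2 d / (A3 d q * (d + 2)))
    (hmax : ∀ tmax' : EReal, tmax < tmax' →
      ¬ ∃ X' Y' Z' W' : ℝ → ℝ,
        StarSystem d q X' Y' Z' W' {t : ℝ | (t : EReal) < tmax'} ∧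
        ∀ t : ℝ, (t : EReal) < tmax →
          X' t = X t ∧ Y' t = Y t ∧ Z' t = Z t ∧ W' t = W t) :
    tmax = ⊤ ∧ Tendsto X atTop (𝓝 0) ∧ Tendsto Y atTop (𝓝 0) ∧ Tendsto Z atTop (𝓝 0) ∧
      Tendsto W atTop (𝓝 0) ∧ Tendsto (scaledY lam X Y) atTop (𝓝 (1 / √C)) := by
  have hWY := fun t ht ↦ mul_sq_le_of_sq_div_sq_le hd hq (hY t ht) (hratio t ht)
  have hmem := fun t ht ↦
    mem_trappingRegion_of_firstIntegral (by positivity) (hfirst t ht) (hWY t ht)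
  obtain rfl := hode.eq_top_of_maximal (isCompact_trappingRegion hd hq) hmem hmax
  simp only [EReal.coe_lt_top, forall_const, Set.ofPred_true] at hode hY hint hfirst hWY hmem
  obtain ⟨l, hl, hlim⟩ := hode.exists_tendsto_scaledY hint hY hlam hC fun t ↦
    le_one_of_firstIntegral (hfirst t) (hWY t)
  have hspeed := hode.tendsto_speed_atTop hmem hd hq hint hY hlam hl hlim
  have hX : Tendsto X atTop (𝓝 0) := tendsto_zero_of_sq_le (fun t ↦ by
    have hd1 : (1 : ℝ) ≤ d := by exact_mod_cast hd
    nlinarith [sq_nonneg (X t), sq_nonneg (Z t)]) hspeed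
  have hZ : Tendsto Z atTop (𝓝 0) :=
    tendsto_zero_of_sq_le (fun t ↦ le_add_of_nonneg_left (by positivity)) hspeed
  have hYlim := hode.tendsto_Y_atTop hmem hd hint (hode.X_nonneg hmem hd hY hlimX) hlam hlim hX
    hspeed
  have hWlim := tendsto_W_of_mul_sq_le hd hq hWY hYlim
  exact ⟨rfl, hX, hYlim, hZ, hWlim, tendsto_one_div_sqrt_of_firstIntegral hC
    (fun t ↦ (scaledY_pos hlam (hY t)).le) hfirst hX hYlim hZ hWlim⟩

theorem exists_real_gt_forall_lt_of_lt {t : ℝ} {T : EReal} (ht : (t : EReal) < T) :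
    ∃ s : ℝ, t < s ∧ ∀ r < s, (r : EReal) < T := by
  obtain ⟨s, hts, hsT⟩ := EReal.lt_iff_exists_real_btwn.mp ht
  exact ⟨s, EReal.coe_lt_coe_iff.mp hts, fun r hr ↦ (EReal.coe_lt_coe_iff.mpr hr).trans hsT⟩

/-- Let `Λ₀ > 0` be as in the preceding theorem (i.e. any solution of (★) satisfying
(i)–(v) obeys `W²/Y² ≤ A₂/(A₃(d+2))`).  If `(X,Y,Z,W)` is a maximally extended solution
of (★) on `(−∞, t_max)` satisfying (i)–(v), then `t_max = +∞`, `(X,Y,Z,W) → (0,0,0,0)`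
as `t → +∞`, and `𝓛 → 1/√𝓒` as `t → +∞`. -/
theorem stmt17 (d : ℕ) (hd : 2 ≤ d) (q : ℝ) (hq : q ≠ 0)
    (Λ0 : ℝ) (hΛ0 : 0 < Λ0)
    -- `Λ₀` is as in the preceding theorem:
    (hΛprop : ∀ (tmax' : ℝ) (X Y Z W : ℝ → ℝ),
      StarSystem d q X Y Z W (Set.Iio tmax') →
      (∀ t < tmax', 0 < Y t) → (∀ t < tmax', 0 < W t) →
      Tendsto X atBot (𝓝 0) → Tendsto Y atBot (𝓝 0) →
      Tendsto Z atBot (𝓝 1) → Tendsto W atBot (𝓝 0) →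
      ∀ (lam C : ℝ), 0 < lam → 0 < C →
      (∀ t < tmax', IntegrableOn X (Set.Iic t)) →
      (∀ t < tmax',
        (d : ℝ) * X t^2 + A2 d * Y t^2 + Z t^2 - A3 d q * W t^2
          = 1 - C * (lam * Real.exp (∫ τ in Set.Iic t, X τ) * Y t)^2) →
      Tendsto (fun t => W t / Y t^2) atBot (𝓝 1) →
      Λ0 ≤ C * lam^2 →
      ∀ t < tmax', W t^2 / Y t^2 ≤ A2 d / (A3 d q * ((d : ℝ) + 2)))
    -- the solution, on `(−∞, t_max)` with `t_max ∈ (−∞, +∞]`: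
    (tmax : EReal) (X Y Z W : ℝ → ℝ)
    (hode : StarSystem d q X Y Z W {t : ℝ | (t : EReal) < tmax})
    (hY : ∀ t : ℝ, (t : EReal) < tmax → 0 < Y t)
    (hW : ∀ t : ℝ, (t : EReal) < tmax → 0 < W t)
    (hlimX : Tendsto X atBot (𝓝 0)) (hlimY : Tendsto Y atBot (𝓝 0))
    (hlimZ : Tendsto Z atBot (𝓝 1)) (hlimW : Tendsto W atBot (𝓝 0))
    (lam C : ℝ) (hlam : 0 < lam) (hC : 0 < C)
    (hint : ∀ t : ℝ, (t : EReal) < tmax → IntegrableOn X (Set.Iic t))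
    (hfirst : ∀ t : ℝ, (t : EReal) < tmax →
      (d : ℝ) * X t^2 + A2 d * Y t^2 + Z t^2 - A3 d q * W t^2
        = 1 - C * (lam * Real.exp (∫ τ in Set.Iic t, X τ) * Y t)^2)
    (hWY2 : Tendsto (fun t => W t / Y t^2) atBot (𝓝 1))
    (hbig : Λ0 ≤ C * lam^2)
    -- maximality: the solution admits no proper extension
    (hmax : ∀ tmax' : EReal, tmax < tmax' →
      ¬ ∃ X' Y' Z' W' : ℝ → ℝ,
        StarSystem d q X' Y' Z' W' {t : ℝ | (t : EReal) < tmax'} ∧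
        ∀ t : ℝ, (t : EReal) < tmax →
          X' t = X t ∧ Y' t = Y t ∧ Z' t = Z t ∧ W' t = W t) :
    tmax = ⊤ ∧
    Tendsto X atTop (𝓝 0) ∧ Tendsto Y atTop (𝓝 0) ∧
    Tendsto Z atTop (𝓝 0) ∧ Tendsto W atTop (𝓝 0) ∧
    Tendsto (fun t => lam * Real.exp (∫ τ in Set.Iic t, X τ) * Y t) atTop
      (𝓝 (1 / Real.sqrt C)) := by
  refine stmt17_general (by lia) hq hode hY hlimX hlam hC hint hfirst (fun t ht ↦ ?_) hmax
  obtain ⟨s, hts, hs⟩ := exists_real_gt_forall_lt_of_lt ht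
  exact hΛprop s X Y Z W (fun r hr ↦ hode r (hs r hr)) (fun r hr ↦ hY r (hs r hr))
    (fun r hr ↦ hW r (hs r hr)) hlimX hlimY hlimZ hlimW lam C hlam hC
    (fun r hr ↦ hint r (hs r hr)) (fun r hr ↦ hfirst r (hs r hr)) hWY2 hbig t hts
end
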